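/- Let L be a smooth operator field on ℝⁿ and f : ℝⁿ → ℝ a smooth function. Then the Haantjes torsion is invariant under adding a multiple of the identity: H_{L + f·I}(ξ, η)(x) = H_L(ξ, η)(x) for all smooth vector fields ξ, η on ℝⁿ and all x, where (L + f·I)(x) = L(x) + f(x)·I. -/

import Mathlib

/-!
The Nijenhuis torsion is a tensor: if `A = L x` and `D v` denotes the derivative of `L` at `x` in
the direction `v`, the derivatives of `ξ` and `η` cancel and
`T_L(ξ, η)(x) = (D (Aξ)) η - (D (Aη)) ξ - A ((D ξ) η - (D η) ξ)`
(`nijTor_eq`, with right-hand side `algTor`). Hence `H_L(ξ, η)(x)` is a purely algebraic expression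
`algHaan A D (ξ x) (η x)`. Replacing `L` by `L + f I` replaces `A` by `A + f(x)` and `D v` by
`D v + df(v)`, which changes the Nijenhuis torsion by
`df(Aξ) η - df(Aη) ξ - df(ξ) Aη + df(η) Aξ`.
The passage from Nijenhuis to Haantjes torsion applies the operator
`B ↦ A² B(·,·) + B(A·,A·) - A B(A·,·) - A B(·,A·)`, which is unchanged when a scalar is
added to `A` and annihilates the extra term; both facts amount to expanding by bilinearity
(`algHaan_shift`).
-/


open Matrix

/-- A vector field on ℝⁿ. -/
abbrev Vec (n : ℕ) := Fin n → ℝ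
abbrev VF (n : ℕ) := Vec n → Vec n
abbrev OpField (n : ℕ) := Vec n → Matrix (Fin n) (Fin n) ℝ

/-- Smooth (C^∞) vector field. -/
def SmoothVF {n : ℕ} (ξ : VF n) : Prop := ContDiff ℝ (⊤ : ℕ∞) ξ

/-- Smooth (C^∞) operator field, entrywise. -/
def SmoothOp {n : ℕ} (L : OpField n) : Prop :=
  ∀ i j : Fin n, ContDiff ℝ (⊤ : ℕ∞) fun x => L x i j

/-- Lie bracket of vector fields. -/
noncomputable def lieB {n : ℕ} (ξ η : VF n) : VF n :=
  fun x => fderiv ℝ η x (ξ x) - fderiv ℝ ξ x (η x)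

/-- Pointwise action of an operator field on a vector field. -/
def app {n : ℕ} (L : OpField n) (ξ : VF n) : VF n := fun x => (L x).mulVec (ξ x)

/-- Nijenhuis torsion. -/
noncomputable def nijTor {n : ℕ} (L : OpField n) (ξ η : VF n) : VF n :=
  app L (app L (lieB ξ η)) + lieB (app L ξ) (app L η)
    - app L (lieB (app L ξ) η) - app L (lieB ξ (app L η))

/-- Generalized Haantjes torsion: `genTor L m` is the torsion of level `m + 1`,
so `genTor L 0` is the Nijenhuis torsion `T^{(1)}_L` and `genTor L (m-1) = T^{(m)}_L`. -/
noncomputable def genTor {n : ℕ} (L : OpField n) : ℕ → VF n → VF n → VF n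
  | 0 => nijTor L
  | m + 1 => fun ξ η =>
      app L (app L (genTor L m ξ η)) + genTor L m (app L ξ) (app L η)
        - app L (genTor L m (app L ξ) η) - app L (genTor L m ξ (app L η))

/-- The Haantjes torsion `H_L = T^{(2)}_L`. -/
noncomputable def haantjes {n : ℕ} (L : OpField n) : VF n → VF n → VF n := genTor L 1

/-- Frölicher–Nijenhuis bracket of two operator fields. -/
noncomputable def fnB {n : ℕ} (K L : OpField n) (ξ η : VF n) : VF n :=
  lieB (app K ξ) (app L η) + lieB (app L ξ) (app K η)
    - app L (lieB (app K ξ) η) - app L (lieB ξ (app K η))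
    - app K (lieB (app L ξ) η) - app K (lieB ξ (app L η))
    + app L (app K (lieB ξ η)) + app K (app L (lieB ξ η))

/-- Generalized Haantjes bracket: `genB K L m` is the bracket of level `m + 1`,
so `genB K L 0 = [[K,L]]` and `genB K L (m-1) = H^{(m)}_{K,L}`. -/
noncomputable def genB {n : ℕ} (K L : OpField n) : ℕ → VF n → VF n → VF n
  | 0 => fnB K L
  | m + 1 => fun ξ η =>
      app K (app L (genB K L m ξ η)) + genB K L m (app K ξ) (app L η)
        - app L (genB K L m (app K ξ) η) - app K (genB K L m ξ (app L η))
        + app L (app K (genB K L m ξ η)) + genB K L m (app L ξ) (app K η)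
        - app K (genB K L m (app L ξ) η) - app L (genB K L m ξ (app K η))

/-- Upper triangular matrix. -/
def UpperTri {n : ℕ} (A : Matrix (Fin n) (Fin n) ℝ) : Prop :=
  ∀ i j : Fin n, j < i → A i j = 0

/-- Strictly upper triangular matrix. -/
def StrictUpperTri {n : ℕ} (A : Matrix (Fin n) (Fin n) ℝ) : Prop :=
  ∀ i j : Fin n, j ≤ i → A i j = 0

/-- Jacobian matrix of a map `f : ℝⁿ → ℝⁿ` at a point. -/
noncomputable def jacobianMatrix {n : ℕ} (f : VF n) (x : Vec n) :
    Matrix (Fin n) (Fin n) ℝ :=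
  Matrix.of fun i j => fderiv ℝ f x (Pi.single j 1) i

/-- `L` is locally reducible, near `p`, to a form whose matrix satisfies `P`
(e.g. upper triangularity) in suitable local coordinates: there are an open
neighbourhood `U` of `p` and a smooth diffeomorphism `φ` from `U` onto an open
set, with smooth inverse `ψ`, such that the pushforward operator field
`y ↦ Dφ(φ⁻¹ y) · L(φ⁻¹ y) · (Dφ(φ⁻¹ y))⁻¹ = Dφ(ψ y) · L(ψ y) · Dψ(y)`
satisfies `P` at every point of `φ '' U`. -/
def LocallyReducible {n : ℕ} (L : OpField n) (p : Vec n)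
    (P : Matrix (Fin n) (Fin n) ℝ → Prop) : Prop :=
  ∃ U : Set (Vec n), IsOpen U ∧ p ∈ U ∧
    ∃ φ ψ : VF n,
      ContDiffOn ℝ (⊤ : ℕ∞) φ U ∧ IsOpen (φ '' U) ∧
      ContDiffOn ℝ (⊤ : ℕ∞) ψ (φ '' U) ∧
      (∀ x ∈ U, ψ (φ x) = x) ∧ (∀ y ∈ φ '' U, φ (ψ y) = y) ∧
      ∀ y ∈ φ '' U, P (jacobianMatrix φ (ψ y) * L (ψ y) * jacobianMatrix ψ y)

section Algebra

variable {E : Type*} [AddCommGroup E] [Module ℝ E]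

/-- The Nijenhuis torsion at a point, in terms of the value `A` of the operator field there and its
directional derivative `D`. -/
def algTor (A : E →ₗ[ℝ] E) (D : E →ₗ[ℝ] E →ₗ[ℝ] E) (u v : E) : E :=
  D (A u) v - D (A v) u - A (D u v - D v u)

/-- The Haantjes torsion at a point, in terms of the value `A` of the operator field there and its
directional derivative `D`. -/
def algHaan (A : E →ₗ[ℝ] E) (D : E →ₗ[ℝ] E →ₗ[ℝ] E) (u v : E) : E :=
  A (A (algTor A D u v)) + algTor A D (A u) (A v)
    - A (algTor A D (A u) v) - A (algTor A D u (A v))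

lemma algHaan_shift (A : E →ₗ[ℝ] E) (D : E →ₗ[ℝ] E →ₗ[ℝ] E) (c : ℝ) (d : E →ₗ[ℝ] ℝ) (u v : E) :
    algHaan (A + c • LinearMap.id) (D + d.smulRight LinearMap.id) u v = algHaan A D u v := by
  simp only [algHaan, algTor, LinearMap.add_apply, LinearMap.smul_apply, LinearMap.id_apply,
    LinearMap.smulRight_apply, map_add, map_sub, map_smul]
  module

end Algebra

/-- The directional derivative `v ↦ D_v L` of an operator field at `x`, taken entrywise and
regarded as a bilinear map `(v, w) ↦ (D_v L) w`. -/
noncomputable def dOp {n : ℕ} (L : OpField n) (x : Vec n) : Vec n →ₗ[ℝ] Vec n →ₗ[ℝ] Vec n :=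
  LinearMap.mk₂ ℝ
    (fun v w => (Matrix.of fun i j => fderiv ℝ (fun y => L y i j) x v).mulVec w)
    (fun v v' w => by
      ext i; simp [Matrix.mulVec, dotProduct, add_mul, Finset.sum_add_distrib])
    (fun c v w => by
      ext i; simp [Matrix.mulVec, dotProduct, mul_assoc, Finset.mul_sum])
    (fun v w w' => Matrix.mulVec_add _ _ _)
    (fun c v w => Matrix.mulVec_smul _ _ _)

lemma smoothVF_app {n : ℕ} {L : OpField n} (hL : SmoothOp L) {ξ : VF n} (hξ : SmoothVF ξ) :
    SmoothVF (app L ξ) := by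
  unfold SmoothVF at *
  rw [contDiff_pi] at *
  intro i
  simp only [app, Matrix.mulVec, dotProduct]
  exact ContDiff.sum fun j _ => (hL i j).mul (hξ j)

lemma SmoothVF.differentiable {n : ℕ} {ξ : VF n} (hξ : SmoothVF ξ) : Differentiable ℝ ξ :=
  ContDiff.differentiable hξ (by simp)

lemma fderiv_app {n : ℕ} {L : OpField n} (hL : SmoothOp L) {ξ : VF n} (hξ : SmoothVF ξ)
    (x v : Vec n) :
    fderiv ℝ (app L ξ) x v = dOp L x v (ξ x) + (L x).mulVecLin (fderiv ℝ ξ x v) := by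
  have hd := hξ.differentiable x
  have hLd : ∀ i j, DifferentiableAt ℝ (fun y => L y i j) x := fun i j =>
    (hL i j).differentiable (by simp) x
  have hξd : ∀ j, HasFDerivAt (fun y => ξ y j)
      ((ContinuousLinearMap.proj j).comp (fderiv ℝ ξ x)) x :=
    hasFDerivAt_pi'.1 hd.hasFDerivAt
  ext i
  have hi := hasFDerivAt_pi'.1 ((smoothVF_app hL hξ).differentiable x).hasFDerivAt i
  have hs : HasFDerivAt (fun y => app L ξ y i) _ x :=
    HasFDerivAt.fun_sum (u := Finset.univ) fun j _ => (hLd i j).hasFDerivAt.mul (hξd j)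
  have := congrArg (fun T => T v) (hi.unique hs)
  simp only [ContinuousLinearMap.comp_apply, ContinuousLinearMap.proj_apply] at this
  rw [this]
  simp [dOp, Matrix.mulVec, dotProduct, ← Finset.sum_add_distrib, mul_comm, add_comm]

/-- Tensoriality of the Nijenhuis torsion: it depends only on the values of the vector fields. -/
lemma nijTor_eq {n : ℕ} {L : OpField n} (hL : SmoothOp L) {ξ η : VF n} (hξ : SmoothVF ξ)
    (hη : SmoothVF η) (x : Vec n) :
    nijTor L ξ η x = algTor (L x).mulVecLin (dOp L x) (ξ x) (η x) := by
  have happ : ∀ ζ : VF n, app L ζ x = (L x).mulVecLin (ζ x) := fun _ => rfl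
  simp only [nijTor, Pi.add_apply, Pi.sub_apply, happ, lieB, fderiv_app hL hξ, fderiv_app hL hη,
    algTor, map_add, map_sub]
  abel

lemma haantjes_eq {n : ℕ} {L : OpField n} (hL : SmoothOp L) {ξ η : VF n} (hξ : SmoothVF ξ)
    (hη : SmoothVF η) (x : Vec n) :
    haantjes L ξ η x = algHaan (L x).mulVecLin (dOp L x) (ξ x) (η x) := by
  have happ : ∀ ζ : VF n, app L ζ x = (L x).mulVecLin (ζ x) := fun _ => rfl
  have hLξ := smoothVF_app hL hξ
  have hLη := smoothVF_app hL hη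
  simp only [haantjes, genTor, Pi.add_apply, Pi.sub_apply, happ, nijTor_eq hL hξ hη,
    nijTor_eq hL hLξ hLη, nijTor_eq hL hLξ hη, nijTor_eq hL hξ hLη, algHaan]

/-- the Haantjes torsion is invariant under adding a functional
multiple of the identity to the operator field. -/
theorem stmt_8 (n : ℕ) (L : OpField n) (hL : SmoothOp L)
    (f : Vec n → ℝ) (hf : ContDiff ℝ (⊤ : ℕ∞) f) :
    ∀ ξ η : VF n, SmoothVF ξ → SmoothVF η →
      ∀ x : Vec n,
        haantjes (fun y => L y + f y • (1 : Matrix (Fin n) (Fin n) ℝ)) ξ η x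
          = haantjes L ξ η x := by
  intro ξ η hξ hη x
  have hM : SmoothOp (fun y => L y + f y • (1 : Matrix (Fin n) (Fin n) ℝ)) := fun i j =>
    (hL i j).add (hf.mul contDiff_const)
  have hA : (L x + f x • (1 : Matrix (Fin n) (Fin n) ℝ)).mulVecLin
      = (L x).mulVecLin + f x • LinearMap.id := by
    ext1; simp
  have hD : dOp (fun y => L y + f y • (1 : Matrix (Fin n) (Fin n) ℝ)) x
      = dOp L x + (fderiv ℝ f x : Vec n →ₗ[ℝ] ℝ).smulRight LinearMap.id := by
    refine LinearMap.ext fun v => LinearMap.ext fun w => ?_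
    have hmat : (Matrix.of fun i j => fderiv ℝ
        (fun y => (L y + f y • (1 : Matrix (Fin n) (Fin n) ℝ)) i j) x v)
        = (Matrix.of fun i j => fderiv ℝ (fun y => L y i j) x v)
          + fderiv ℝ f x v • (1 : Matrix (Fin n) (Fin n) ℝ) := by
      ext i j
      have h := ((hL i j).differentiable (by simp) x).hasFDerivAt.add
        ((hf.differentiable (by simp) x).hasFDerivAt.mul_const
          ((1 : Matrix (Fin n) (Fin n) ℝ) i j))
      have h' := congrArg (fun T => T v) h.fderiv
      refine h'.trans ?_
      simp [mul_comm]
    simp only [dOp, LinearMap.mk₂_apply, LinearMap.add_apply, hmat, Matrix.add_mulVec,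
      Matrix.smul_mulVec, Matrix.one_mulVec, LinearMap.smulRight_apply, LinearMap.smul_apply,
      LinearMap.id_apply, ContinuousLinearMap.coe_coe]
  rw [haantjes_eq hM hξ hη, haantjes_eq hL hξ hη, hA, hD, algHaan_shift]
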